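/- The 2-periodic Lyness composition map G_{b,a}(x,y) = ((a+y)/x, (a + bx + y)/(xy)) with b = 1/a, a ≠ 0, satisfies G_{1/a,a}^5 = Id if and only if a ∈ {1, (−1+i√3)/2, (−1−i√3)/2}. In the latter two cases b = 1/a = ā and the corresponding recurrence is globally 10-periodic. -/

import Mathlib

/-!
Orbits of `G_{b,a}` are read off the recurrence `xₙ xₙ₊₂ = cₙ + xₙ₊₁` with `cₙ` alternating between
`a` and `b`. Suppose `a b = 1`.

If `a³ = 1`, then `a = b²` and `b = a²`, so rescaling the even and odd terms by `b` and `a` turns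
this into the classical Lyness recurrence with constant `1`, which has period five. In the original
variables, five steps of the recurrence multiply by `b` and by `a` alternately, and ten steps are
the identity.

Conversely, let `(x, y)` be a fixed point: `x² = a + y`, `y² = b + x`. The derivative of `G_{b,a}`
there is a non-scalar `2 × 2` matrix with determinant `1` and trace `τ = 1 / (x y) - 2`. If its
fifth power is the identity, then `τ² + τ = 1`, that is, `(x y)² - 3 x y + 1 = 0`. Substituting this
into `(x² - a)(y² - b) = x y` gives `(x - a y)² = 0`, and `x = a y` forces `a³ = 1`.
-/

open Filter Topology

section Algebra

variable {K : Type*} [Field K]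

/-- The composition `G_{b,a} = G_b ∘ G_a` of two Lyness maps `G_c (x, y) = (y, (c + y) / x)`,
written out as a single rational map; with the convention `z / 0 = 0` the two can differ where
`x = 0`. -/
def lynessComp (a b : K) : K × K → K × K := fun w =>
  ((a + w.2) / w.1, (a + b * w.1 + w.2) / (w.1 * w.2))

/-- `F^n = Id` as rational maps of the plane whose denominators vanish on the coordinate axes: the
identity is required only at points whose first `n` iterates avoid the axes, where no division by
zero occurs. -/
def IterateEqIdOffAxes (F : K × K → K × K) (n : ℕ) : Prop :=
  ∀ z, (∀ i : ℕ, i < n → (F^[i] z).1 ≠ 0 ∧ (F^[i] z).2 ≠ 0) → F^[n] z = z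

variable {a b x y : K}

lemma fst_mul_fst_lynessComp (b : K) {w : K × K} (h : w.1 ≠ 0) :
    w.1 * (lynessComp a b w).1 = a + w.2 :=
  mul_div_cancel₀ _ h

lemma snd_mul_snd_lynessComp {w : K × K} (h₁ : w.1 ≠ 0) (h₂ : w.2 ≠ 0) :
    w.2 * (lynessComp a b w).2 = b + (lynessComp a b w).1 := by
  simp only [lynessComp]
  field_simp
  ring

lemma lyness_recurrence_five_steps {x₀ x₁ x₂ x₃ x₄ x₅ : K} (hab : a * b = 1) (hb : b ^ 2 = a)
    (h₂ : x₂ ≠ 0) (h₃ : x₃ ≠ 0) (h₀₂ : x₀ * x₂ = a + x₁) (h₁₃ : x₁ * x₃ = b + x₂)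
    (h₂₄ : x₂ * x₄ = a + x₃) (h₃₅ : x₃ * x₅ = b + x₄) : x₅ = b * x₀ := by
  refine mul_left_cancel₀ (mul_ne_zero h₂ h₃) ?_
  calc x₂ * x₃ * x₅ = b * x₂ + a + x₃ := by linear_combination x₂ * h₃₅ + h₂₄
    _ = b * (a + x₁) * x₃ := by linear_combination -b * h₁₃ - hb - x₃ * hab
    _ = x₂ * x₃ * (b * x₀) := by linear_combination -b * x₃ * h₀₂

theorem lynessComp_iterate_five_eq_id (hab : a * b = 1) (hb : b ^ 2 = a) :
    IterateEqIdOffAxes (lynessComp a b) 5 := by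
  intro z hz
  have ha : a ^ 2 = b := by linear_combination b * hab - a * hb
  set p : ℕ → K := fun i => ((lynessComp a b)^[i] z).1
  set q : ℕ → K := fun i => ((lynessComp a b)^[i] z).2
  have hp : ∀ i < 5, p i * p (i + 1) = a + q i := fun i hi => by
    simpa only [p, q, Function.iterate_succ_apply'] using fst_mul_fst_lynessComp b (hz i hi).1
  have hq : ∀ i < 5, q i * q (i + 1) = b + p (i + 1) := fun i hi => by
    simpa only [p, q, Function.iterate_succ_apply'] using
      snd_mul_snd_lynessComp (hz i hi).1 (hz i hi).2
  have q_add_two : ∀ i < 4, q (i + 2) = b * p i := fun i hi =>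
    lyness_recurrence_five_steps hab hb (hz (i + 1) (by lia)).1 (hz (i + 1) (by lia)).2
      (hp i (by lia)) (hq i (by lia)) (hp (i + 1) (by lia)) (hq (i + 1) (by lia))
  have p_add_three : ∀ i < 3, p (i + 3) = a * q i := fun i hi =>
    lyness_recurrence_five_steps (by rw [mul_comm, hab]) ha
      (hz (i + 1) (by lia)).2 (hz (i + 2) (by lia)).1
      (hq i (by lia)) (hp (i + 1) (by lia)) (hq (i + 1) (by lia)) (hp (i + 2) (by lia))
  refine Prod.ext ?_ ?_
  · calc p 5 = a * (b * p 0) := by rw [p_add_three 2 (by lia), q_add_two 0 (by lia)]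
      _ = p 0 := by rw [← mul_assoc, hab, one_mul]
  · calc q 5 = b * (a * q 0) := by rw [q_add_two 3 (by lia), p_add_three 0 (by lia)]
      _ = q 0 := by rw [← mul_assoc, mul_comm b, hab, one_mul]

lemma lynessComp_eq_self (hx : x ≠ 0) (hy : y ≠ 0) (hxy : x ^ 2 = a + y) (hyx : y ^ 2 = b + x) :
    lynessComp a b (x, y) = (x, y) := by
  refine Prod.ext ?_ ?_
  · rw [lynessComp, div_eq_iff hx]
    linear_combination -hxy
  · rw [lynessComp, div_eq_iff (mul_ne_zero hx hy)]
    linear_combination -hxy - x * hyx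

open Polynomial in
lemma exists_sq_eq_add_and_sq_eq_add [IsAlgClosed K] (a b : K) :
    ∃ x y : K, x ^ 2 = a + y ∧ y ^ 2 = b + x := by
  have hdeg : ((X ^ 2 - C a) ^ 2 - X - C b).degree = 4 := by compute_degree!
  obtain ⟨x, hx⟩ := IsAlgClosed.exists_root _ (hdeg.trans_ne (by decide))
  simp only [IsRoot.def, eval_sub, eval_pow, eval_X, eval_C] at hx
  exact ⟨x, x ^ 2 - a, by ring, by linear_combination hx⟩

-- The hypothesis `hA` is the Cayley–Hamilton relation for trace `τ` and determinant `1`.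
lemma trace_eq_of_pow_five_eq_one {R : Type*} [Ring R] [Algebra K R] {A : R} {τ : K}
    (hA : A * A = τ • A - 1) (hscalar : ∀ c : K, A ≠ c • 1) (hA5 : A ^ 5 = 1) :
    τ ^ 2 + τ - 1 = 0 := by
  have hA4 : A * A * (A * A) = (τ ^ 3 - 2 * τ) • A - (τ ^ 2 - 1) • 1 := by
    rw [hA]
    simp only [sub_mul, mul_sub, smul_mul_smul_comm, mul_one, one_mul, hA]
    module
  have hlinear : (τ ^ 4 - 3 * τ ^ 2 + 1) • A = (τ ^ 3 - 2 * τ + 1) • (1 : R) := by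
    have hA5' : A ^ 5 = (τ ^ 4 - 3 * τ ^ 2 + 1) • A - (τ ^ 3 - 2 * τ) • 1 := by
      rw [show A ^ 5 = A * A * (A * A) * A by noncomm_ring, hA4]
      simp only [sub_mul, smul_mul_assoc, one_mul, hA]
      module
    rw [hA5, eq_sub_iff_add_eq] at hA5'
    rw [← hA5']
    module
  have hcoeff : τ ^ 4 - 3 * τ ^ 2 + 1 = 0 := by
    by_contra h
    exact hscalar _ (by rw [mul_smul, ← hlinear, inv_smul_smul₀ h])
  have hconst : τ ^ 3 - 2 * τ + 1 = 0 := by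
    rw [hcoeff, zero_smul] at hlinear
    refine (smul_eq_zero.mp hlinear.symm).resolve_right fun h => hscalar 0 ?_
    rw [zero_smul, ← mul_one A, h, mul_zero]
  linear_combination τ * hconst - hcoeff

lemma cube_eq_one_of_fixed_point (hab : a * b = 1) (hy : y ≠ 0) (hxy : x ^ 2 = a + y)
    (hyx : y ^ 2 = b + x) (hprod : (x * y) ^ 2 - 3 * (x * y) + 1 = 0) : a ^ 3 = 1 := by
  have hsq : (x - a * y) ^ 2 = 0 := by
    linear_combination a * hprod + (a - x ^ 2) * hab - a * (y ^ 2 - b) * hxy - a * y * hyx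
  have hx : x = a * y := sub_eq_zero.mp (pow_eq_zero_iff two_ne_zero |>.mp hsq)
  refine mul_right_cancel₀ hy ?_
  subst hx
  linear_combination hxy - a ^ 2 * hyx - a * hab

end Algebra

section Derivative

variable {𝕜 : Type*} [NontriviallyNormedField 𝕜]

lemma IterateEqIdOffAxes.pow_eq_one_of_hasFDerivAt {F : 𝕜 × 𝕜 → 𝕜 × 𝕜} {n : ℕ}
    (hF : IterateEqIdOffAxes F n) {p : 𝕜 × 𝕜} (hp : F p = p) (hp₁ : p.1 ≠ 0) (hp₂ : p.2 ≠ 0)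
    {A : 𝕜 × 𝕜 →L[𝕜] 𝕜 × 𝕜} (hA : HasFDerivAt F A p) : A ^ n = 1 := by
  have hoff : ∀ i, ∀ᶠ z in 𝓝 p, (F^[i] z).1 ≠ 0 ∧ (F^[i] z).2 ≠ 0 := fun i => by
    have hcont : ContinuousAt F^[i] p := (hA.iterate hp i).continuousAt
    have hfix : F^[i] p = p := Function.iterate_fixed hp i
    exact (hcont.fst.eventually_ne (by rwa [hfix])).and (hcont.snd.eventually_ne (by rwa [hfix]))
  have hid : F^[n] =ᶠ[𝓝 p] id :=
    ((Set.finite_lt_nat n).eventually_all.mpr fun i _ => hoff i).mono hF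
  exact (hA.iterate hp n).unique ((hasFDerivAt_id p).congr_of_eventuallyEq hid)

lemma hasFDerivAt_const_add_div {E : Type*} [NormedAddCommGroup E] [NormedSpace 𝕜 E]
    {g h : E → 𝕜} {g' h' : E →L[𝕜] 𝕜} {p : E} {c : 𝕜} (hg : HasFDerivAt g g' p)
    (hh : HasFDerivAt h h' p) (hp : h p ≠ 0) (heq : h p ^ 2 = c + g p) :
    HasFDerivAt (fun z => (c + g z) / h z) ((h p)⁻¹ • g' - h') p := by
  have hinv : HasFDerivAt (fun z => (h z)⁻¹) (-(h p ^ 2)⁻¹ • h') p :=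
    (hasDerivAt_inv hp).comp_hasFDerivAt p hh
  simp only [div_eq_mul_inv]
  refine ((hg.const_add c).mul hinv).congr_fderiv ?_
  rw [← heq, smul_smul, mul_neg, mul_inv_cancel₀ (pow_ne_zero 2 hp)]
  module

variable {a b x y : 𝕜}

/-- The derivative of `lynessComp a b` at a fixed point `(x, y)` off the axes. The parameters `a`
and `b` are eliminated by the fixed point equations `x ^ 2 = a + y` and `y ^ 2 = b + x`. -/
def lynessCompDeriv (x y : 𝕜) : 𝕜 × 𝕜 →L[𝕜] 𝕜 × 𝕜 :=
  let d : 𝕜 × 𝕜 →L[𝕜] 𝕜 := x⁻¹ • .snd 𝕜 𝕜 𝕜 - .fst 𝕜 𝕜 𝕜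
  d.prod (y⁻¹ • d - .snd 𝕜 𝕜 𝕜)

lemma lynessCompDeriv_apply (x y : 𝕜) (w : 𝕜 × 𝕜) :
    lynessCompDeriv x y w = (x⁻¹ * w.2 - w.1, y⁻¹ * (x⁻¹ * w.2 - w.1) - w.2) :=
  rfl

lemma hasFDerivAt_lynessComp (hx : x ≠ 0) (hy : y ≠ 0) (hxy : x ^ 2 = a + y)
    (hyx : y ^ 2 = b + x) : HasFDerivAt (lynessComp a b) (lynessCompDeriv x y) (x, y) := by
  have hfst : HasFDerivAt (fun w : 𝕜 × 𝕜 => (a + w.2) / w.1)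
      (x⁻¹ • .snd 𝕜 𝕜 𝕜 - .fst 𝕜 𝕜 𝕜) (x, y) :=
    hasFDerivAt_const_add_div (p := (x, y)) hasFDerivAt_snd hasFDerivAt_fst hx hxy
  have hfix : (a + y) / x = x := by rw [← hxy, sq, mul_self_div_self]
  have hsnd := hasFDerivAt_const_add_div (c := b) hfst hasFDerivAt_snd hy (by simpa only [hfix])
  have hne : ∀ᶠ w : 𝕜 × 𝕜 in 𝓝 (x, y), w.1 ≠ 0 := continuousAt_fst.eventually_ne hx
  refine hfst.prodMk (hsnd.congr_of_eventuallyEq (hne.mono fun w hw => ?_))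
  change (a + b * w.1 + w.2) / (w.1 * w.2) = (b + (a + w.2) / w.1) / w.2
  rw [← div_div]
  congr 1
  field_simp
  ring

lemma lynessCompDeriv_mul_self (hx : x ≠ 0) (hy : y ≠ 0) :
    lynessCompDeriv x y * lynessCompDeriv x y =
      ((x * y)⁻¹ - 2) • lynessCompDeriv x y - 1 := by
  refine ContinuousLinearMap.ext fun w => ?_
  simp only [mul_apply_eq_comp, sub_apply, smul_apply, one_apply_eq_self, lynessCompDeriv_apply]
  refine Prod.ext ?_ ?_ <;> simp only [Prod.fst_sub, Prod.snd_sub, Prod.smul_mk, smul_eq_mul] <;>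
    field_simp <;> ring

lemma lynessCompDeriv_ne_smul_one (x : 𝕜) (hy : y ≠ 0) (c : 𝕜) :
    lynessCompDeriv x y ≠ c • 1 := fun h => by
  have hsnd := congrArg (fun A : 𝕜 × 𝕜 →L[𝕜] 𝕜 × 𝕜 => (A (1, 0)).2) h
  simp [lynessCompDeriv_apply, hy] at hsnd

lemma fixed_point_mul_eq_of_iterate_five_eq_id (h : IterateEqIdOffAxes (lynessComp a b) 5)
    (hx : x ≠ 0) (hy : y ≠ 0) (hxy : x ^ 2 = a + y) (hyx : y ^ 2 = b + x) :
    (x * y) ^ 2 - 3 * (x * y) + 1 = 0 := by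
  have hpow : lynessCompDeriv x y ^ 5 = 1 :=
    h.pow_eq_one_of_hasFDerivAt (lynessComp_eq_self hx hy hxy hyx) hx hy
      (hasFDerivAt_lynessComp hx hy hxy hyx)
  have htrace : ((x * y)⁻¹ - 2) ^ 2 + ((x * y)⁻¹ - 2) - 1 = 0 :=
    trace_eq_of_pow_five_eq_one (lynessCompDeriv_mul_self hx hy)
      (lynessCompDeriv_ne_smul_one x hy) hpow
  field_simp at htrace
  linear_combination htrace

theorem cube_eq_one_of_lynessComp_iterate_five_eq_id [IsAlgClosed 𝕜] (hab : a * b = 1)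
    (h : IterateEqIdOffAxes (lynessComp a b) 5) : a ^ 3 = 1 := by
  obtain ⟨x, y, hxy, hyx⟩ := exists_sq_eq_add_and_sq_eq_add a b
  rcases eq_or_ne x 0 with rfl | hx
  · have ha : a ^ 2 = b := by linear_combination hyx - (a - y) * hxy
    linear_combination a * ha + hab
  rcases eq_or_ne y 0 with rfl | hy
  · have hb : b ^ 2 = a := by linear_combination hxy + (x - b) * hyx
    linear_combination (a * b + 1) * hab - a ^ 2 * hb
  exact cube_eq_one_of_fixed_point hab hy hxy hyx
    (fixed_point_mul_eq_of_iterate_five_eq_id h hx hy hxy hyx)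

theorem stmt_18_general [IsAlgClosed 𝕜] (hab : a * b = 1) :
    IterateEqIdOffAxes (lynessComp a b) 5 ↔ a ^ 3 = 1 :=
  ⟨cube_eq_one_of_lynessComp_iterate_five_eq_id hab, fun ha =>
    lynessComp_iterate_five_eq_id hab (by linear_combination (a * b + 1) * a * hab - b ^ 2 * ha)⟩

end Derivative

lemma complex_cube_eq_one_iff {a : ℂ} :
    a ^ 3 = 1 ↔ a = 1 ∨ a = (-1 + Complex.I * Real.sqrt 3) / 2 ∨
      a = (-1 - Complex.I * Real.sqrt 3) / 2 := by
  have hsq : discrim (1 : ℂ) 1 1 = Complex.I * Real.sqrt 3 * (Complex.I * Real.sqrt 3) := by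
    have h3 : ((Real.sqrt 3 : ℝ) : ℂ) ^ 2 = 3 := by norm_cast; simp
    rw [discrim]
    linear_combination h3 - (Real.sqrt 3 : ℂ) ^ 2 * Complex.I_sq
  have hquad := quadratic_eq_zero_iff one_ne_zero hsq a
  rw [mul_one] at hquad
  have hfactor : a ^ 3 - 1 = (a - 1) * (1 * (a * a) + 1 * a + 1) := by ring
  rw [← hquad, ← sub_eq_zero, hfactor, mul_eq_zero, sub_eq_zero]

lemma conj_eq_one_div_of_cube_eq_one {a : ℂ} (ha : a ^ 3 = 1) :
    (starRingEnd ℂ) a = 1 / a := by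
  rw [one_div, Complex.inv_eq_conj (Complex.norm_eq_one_of_pow_eq_one ha three_ne_zero)]

/-- For `a ≠ 0` and `b = 1/a`, the composition Lyness map
`G_{1/a,a}(x,y) = ((a+y)/x, (a + x/a + y)/(xy))` satisfies `G_{1/a,a}^5 = Id`
(wherever defined) if and only if `a ∈ {1, (−1+i√3)/2, (−1−i√3)/2}`; in the
latter two cases `b = 1/a = ā`. -/
theorem stmt_18 :
    (∀ a : ℂ, a ≠ 0 →
      ((∀ z : ℂ × ℂ,
          (∀ i : ℕ, i < 5 →
            ((fun w : ℂ × ℂ =>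
                ((a + w.2) / w.1,
                  (a + (1 / a) * w.1 + w.2) / (w.1 * w.2)))^[i] z).1 ≠ 0 ∧
            ((fun w : ℂ × ℂ =>
                ((a + w.2) / w.1,
                  (a + (1 / a) * w.1 + w.2) / (w.1 * w.2)))^[i] z).2 ≠ 0) →
          (fun w : ℂ × ℂ =>
              ((a + w.2) / w.1,
                (a + (1 / a) * w.1 + w.2) / (w.1 * w.2)))^[5] z = z) ↔
        (a = 1 ∨ a = (-1 + Complex.I * Real.sqrt 3) / 2 ∨
          a = (-1 - Complex.I * Real.sqrt 3) / 2))) ∧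
    ∀ a : ℂ,
      (a = (-1 + Complex.I * Real.sqrt 3) / 2 ∨
        a = (-1 - Complex.I * Real.sqrt 3) / 2) →
      (starRingEnd ℂ) a = 1 / a := by
  refine ⟨fun a ha => ?_, fun a ha => ?_⟩
  · exact (stmt_18_general (mul_one_div_cancel ha)).trans complex_cube_eq_one_iff
  · exact conj_eq_one_div_of_cube_eq_one (complex_cube_eq_one_iff.mpr (.inr ha))
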